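/- Let F be a finite field with q elements, V = F⁷ with coordinates indexed 0,…,6, and Q the quadratic form Q(x) = x₀x₄ + x₁x₅ + x₂x₆ − x₃² on V. Then the number of moving lines equals (q⁴ + q² + 1)(q + 1)q². -/

import Mathlib

variable {F : Type} [Field F]

/-- The quadratic form `Q(x) = x₀x₄ + x₁x₅ + x₂x₆ − x₃²` on `F⁷`. -/
def quadForm (x : Fin 7 → F) : F :=
  x 0 * x 4 + x 1 * x 5 + x 2 * x 6 - x 3 ^ 2

/-- A singular point: a 1-dimensional subspace of `F⁷` on which `Q` vanishes. -/
def SingularPoint (W : Submodule F (Fin 7 → F)) : Prop :=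
  Module.finrank F W = 1 ∧ ∀ x ∈ W, quadForm x = 0

/-- A totally singular line: a 2-dimensional subspace of `F⁷` on which `Q` vanishes. -/
def TotallySingularLine (W : Submodule F (Fin 7 → F)) : Prop :=
  Module.finrank F W = 2 ∧ ∀ x ∈ W, quadForm x = 0

/-- Grassmann coordinate `m_{ij} = u_i v_j − u_j v_i` of the pair `(u, v)`. -/
def grass (u v : Fin 7 → F) (i j : Fin 7) : F := u i * v j - u j * v i

/-- The hexagon equations for a pair of vectors `(u, v)`. -/
def HexEq (u v : Fin 7 → F) : Prop :=
  grass u v 1 2 = grass u v 3 4 ∧ grass u v 5 4 = grass u v 3 2 ∧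
  grass u v 2 0 = grass u v 3 5 ∧ grass u v 6 5 = grass u v 3 0 ∧
  grass u v 0 1 = grass u v 3 6 ∧ grass u v 4 6 = grass u v 3 1

/-- A subspace satisfies the hexagon equations if every pair of its vectors does
(for a 2-dimensional subspace this is independent of the choice of basis). -/
def SatisfiesHexEq (W : Submodule F (Fin 7 → F)) : Prop :=
  ∀ u ∈ W, ∀ v ∈ W, HexEq u v

/-- An absolute line: a totally singular line satisfying the hexagon equations. -/
def AbsoluteLine (W : Submodule F (Fin 7 → F)) : Prop :=
  TotallySingularLine W ∧ SatisfiesHexEq W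

/-- A moving line: a totally singular line not satisfying the hexagon equations. -/
def MovingLine (W : Submodule F (Fin 7 → F)) : Prop :=
  TotallySingularLine W ∧ ¬ SatisfiesHexEq W

/-!
A moving line is counted through its ordered bases `(u, v)`: it has `(q² - 1)(q² - q)` of them, and
they are the pairs of a singular vector `u ≠ 0` and a singular vector `v ⊥ u` violating the hexagon
equations. There are `q⁶ - 1` choices for `u`. The form is affine on each line in direction `u`, so
among the `q⁶` singular vectors exactly `q⁵` are orthogonal to `u`.

To count those `v` that satisfy the hexagon equations, identify `F⁷` with the split octonions of
trace zero, with norm `Q`. For singular `u ≠ 0` and `v ⊥ u`, the hexagon equations say precisely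
that the octonion product `u v` vanishes. Left multiplication by `u` squares to `-Q(u) = 0`, and
left multiplication by some `w` with `Q(u + w) = Q(w) + 1` is up to sign a contracting homotopy for
it, so its kernel has half of the dimension `8`. The trace does not vanish on this kernel, so the
trace-zero octonions in it form a space of dimension `3`. This leaves `q⁵ - q³` choices for `v`.
-/

open Module QuadraticMap
open scoped Matrix

section Counting

theorem ncard_fst_mem_snd_mem {α β : Type*} [Finite α] [Finite β] {s : Set α}
    {t : α → Set β} {n : ℕ} (ht : ∀ a ∈ s, (t a).ncard = n) :
    {p : α × β | p.1 ∈ s ∧ p.2 ∈ t p.1}.ncard = s.ncard * n := by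
  have := Fintype.ofFinite s
  let e : {p : α × β | p.1 ∈ s ∧ p.2 ∈ t p.1} ≃ Σ a : s, t a :=
    { toFun := fun p => ⟨⟨p.1.1, p.2.1⟩, ⟨p.1.2, p.2.2⟩⟩
      invFun := fun a => ⟨(a.1, a.2), a.1.2, a.2.2⟩ }
  calc {p : α × β | p.1 ∈ s ∧ p.2 ∈ t p.1}.ncard
      = ∑ a : s, (t a).ncard := by rw [← Nat.card_coe_set_eq, Nat.card_congr e, Nat.card_sigma]; rfl
    _ = s.ncard * n := by
      rw [Finset.sum_congr rfl fun (a : s) _ => ht a a.2, Finset.sum_const, smul_eq_mul,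
        Finset.card_univ, ← Nat.card_eq_fintype_card, Nat.card_coe_set_eq]

theorem ncard_dual_fiber_mul_card {R M : Type*} [Ring R] [AddCommGroup M] [Module R M]
    {φ : M →ₗ[R] R} (hφ : Function.Surjective φ) (c : R) :
    {x | φ x = c}.ncard * Nat.card R = Nat.card M := by
  obtain ⟨w, hw⟩ := hφ 1
  let e : {x | φ x = c} × R ≃ M :=
    { toFun := fun p => p.1 + p.2 • w
      invFun := fun x => (⟨x - (φ x - c) • w, by simp [hw]⟩, φ x - c)
      left_inv := by rintro ⟨⟨x, rfl⟩, t⟩; simp [hw]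
      right_inv := fun x => sub_add_cancel _ _ }
  rw [← Nat.card_coe_set_eq, ← Nat.card_prod, Nat.card_congr e]

theorem ncard_dotProduct_fiber {K : Type*} [Field K] [Finite K] {n : ℕ} {x : Fin (n + 1) → K}
    (hx : x ≠ 0) (c : K) : {y | x ⬝ᵥ y = c}.ncard = Nat.card K ^ n := by
  have hφ : dotProductBilin K K x ≠ 0 := fun h =>
    hx (dotProduct_eq_zero x fun y => LinearMap.congr_fun h y)
  have := ncard_dual_fiber_mul_card (LinearMap.surjective hφ) c
  rw [Nat.card_fun, Nat.card_fin, pow_succ] at this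
  exact Nat.eq_of_mul_eq_mul_right Nat.card_pos this

theorem ncard_dotProduct_eq_apply {K Z : Type*} [Field K] [Finite K] [Finite Z] (n : ℕ)
    (f : Z → K) :
    {p : ((Fin (n + 1) → K) × Z) × (Fin (n + 1) → K) | p.1.1 ⬝ᵥ p.2 = f p.1.2}.ncard
        + Nat.card Z * Nat.card K ^ n =
      Nat.card Z * Nat.card K ^ (2 * n + 1) + {z | f z = 0}.ncard * Nat.card K ^ (n + 1) := by
  have card_V : Nat.card (Fin (n + 1) → K) = Nat.card K ^ (n + 1) := by
    rw [Nat.card_fun, Nat.card_fin]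
  set S := {p : ((Fin (n + 1) → K) × Z) × (Fin (n + 1) → K) | p.1.1 ⬝ᵥ p.2 = f p.1.2}
  have split := Set.ncard_inter_add_ncard_sdiff_eq_ncard S {p | p.1.1 = 0}
  have zero : (S ∩ {p | p.1.1 = 0}).ncard = {z | f z = 0}.ncard * Nat.card K ^ (n + 1) := by
    have : S ∩ {p | p.1.1 = 0} = ({0} ×ˢ {z | f z = 0}) ×ˢ Set.univ := by
      ext ⟨⟨x, z⟩, y⟩
      suffices x ⬝ᵥ y = f z ∧ x = 0 ↔ x = 0 ∧ f z = 0 by simpa [S]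
      rw [and_comm]
      refine and_congr_right ?_
      rintro rfl
      rw [zero_dotProduct, eq_comm]
    rw [this, Set.ncard_prod, Set.ncard_prod, Set.ncard_singleton, one_mul, Set.ncard_univ, card_V]
  have nonzero : (S \ {p | p.1.1 = 0}).ncard + Nat.card Z * Nat.card K ^ n =
      Nat.card Z * Nat.card K ^ (2 * n + 1) := by
    have : S \ {p | p.1.1 = 0} =
        {p | p.1 ∈ ({0}ᶜ : Set (Fin (n + 1) → K)) ×ˢ (Set.univ : Set Z) ∧
          p.2 ∈ {y | p.1.1 ⬝ᵥ y = f p.1.2}} := by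
      ext p
      simp [S, and_comm]
    have compl := Set.ncard_add_ncard_compl ({0} : Set (Fin (n + 1) → K))
    rw [Set.ncard_singleton, card_V] at compl
    rw [this, ncard_fst_mem_snd_mem (s := {0}ᶜ ×ˢ Set.univ) (t := fun a => {y | a.1 ⬝ᵥ y = f a.2})
      fun a ha => ncard_dotProduct_fiber ha.1 (f a.2), Set.ncard_prod, Set.ncard_univ]
    linear_combination (Nat.card Z * Nat.card K ^ n) * compl
  rw [← split, zero, ← nonzero]
  ring

/-- The set of `k`-tuples of vectors that are a basis of the subspace `W`. -/
def bases {K V : Type*} [Field K] [AddCommGroup V] [Module K V] (k : ℕ) (W : Submodule K V) :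
    Set (Fin k → V) :=
  {s | LinearIndependent K s ∧ Submodule.span K (Set.range s) = W}

theorem ncard_bases {K V : Type*} [Field K] [Finite K] [AddCommGroup V] [Module K V] [Finite V]
    {W : Submodule K V} {k : ℕ} (hW : finrank K W = k) :
    (bases k W).ncard = ∏ i : Fin k, (Nat.card K ^ k - Nat.card K ^ (i : ℕ)) := by
  have := Fintype.ofFinite K
  have image : (W.subtype ∘ ·) '' {s : Fin k → W | LinearIndependent K s} =
      bases k W := by
    ext s
    constructor
    · rintro ⟨s, hs, rfl⟩
      have hs' := hs.map' W.subtype W.ker_subtype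
      refine ⟨hs', Submodule.eq_of_le_of_finrank_eq (Submodule.span_le.2 ?_) ?_⟩
      · rintro _ ⟨i, rfl⟩
        exact (s i).2
      · rw [hW]
        exact (finrank_span_eq_card hs').trans (Fintype.card_fin k)
    · rintro ⟨hs, rfl⟩
      exact ⟨fun i => ⟨s i, Submodule.subset_span ⟨i, rfl⟩⟩, linearIndependent_span hs, rfl⟩
  have card := card_linearIndependent (K := K) (V := W) hW.ge
  rw [← image, Set.ncard_image_of_injective _ W.subtype_injective.comp_left]
  rwa [hW, ← Nat.card_eq_fintype_card] at card

theorem ncard_submodule_mul_prod {K V : Type*} [Field K] [Finite K] [AddCommGroup V] [Module K V]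
    [Finite V] (k : ℕ) (P : Submodule K V → Prop) :
    {W : Submodule K V | finrank K W = k ∧ P W}.ncard *
        ∏ i : Fin k, (Nat.card K ^ k - Nat.card K ^ (i : ℕ)) =
      {s : Fin k → V | LinearIndependent K s ∧ P (Submodule.span K (Set.range s))}.ncard := by
  have : Finite (Submodule K V) := .of_injective _ SetLike.coe_injective
  rw [← ncard_fst_mem_snd_mem (t := bases k) fun W hW => ncard_bases hW.1]
  refine Set.BijOn.ncard_eq (f := Prod.snd) ⟨?_, ?_, ?_⟩
  · rintro ⟨W, s⟩ ⟨⟨-, hP⟩, hs, hW⟩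
    exact ⟨hs, hW ▸ hP⟩
  · rintro ⟨W, s⟩ ⟨-, -, hW⟩ ⟨W', s'⟩ ⟨-, -, hW'⟩ (rfl : s = s')
    exact Prod.ext (hW.symm.trans hW') rfl
  · rintro s ⟨hs, hP⟩
    exact ⟨(_, s), ⟨⟨(finrank_span_eq_card hs).trans (Fintype.card_fin k), hP⟩, hs, rfl⟩, rfl⟩

end Counting

section QuadraticForms

variable {K V : Type*} [AddCommGroup V]

theorem forall_mem_span_pair_eq_zero_iff [CommRing K] [Module K V] {Q : QuadraticForm K V}
    {u v : V} :
    (∀ x ∈ Submodule.span K {u, v}, Q x = 0) ↔ Q u = 0 ∧ Q v = 0 ∧ polar Q u v = 0 := by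
  constructor
  · intro h
    have hu : u ∈ Submodule.span K {u, v} := Submodule.subset_span (by simp)
    have hv : v ∈ Submodule.span K {u, v} := Submodule.subset_span (by simp)
    exact ⟨h u hu, h v hv, by simp [polar, h u hu, h v hv, h _ (add_mem hu hv)]⟩
  · rintro ⟨hu, hv, huv⟩ x hx
    obtain ⟨a, b, rfl⟩ := Submodule.mem_span_pair.1 hx
    simp [QuadraticMap.map_add Q, QuadraticMap.map_smul, polar_smul_left, polar_smul_right,
      hu, hv, huv]

/- On a line `v + K u` in the direction of a singular vector `u` the form is affine with slope
`polar Q u v`, so it has exactly one zero as soon as that slope is nonzero. -/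
theorem ncard_singular_polar_ne_zero_mul_card [Field K] [Module K V] {Q : QuadraticForm K V}
    {u : V} (hu : Q u = 0) :
    {v | Q v = 0 ∧ polar Q u v ≠ 0}.ncard * Nat.card K = {v | polar Q u v ≠ 0}.ncard := by
  have Q_add_smul (v : V) (t : K) : Q (v + t • u) = Q v + t * polar Q u v := by
    simp [QuadraticMap.map_add Q, QuadraticMap.map_smul, hu, polar_comm Q v]
  have polar_add_smul (v : V) (t : K) : polar Q u (v + t • u) = polar Q u v := by
    simp [polar_add_right, polar_smul_right, hu]
  let e : {v | Q v = 0 ∧ polar Q u v ≠ 0} × K ≃ {v | polar Q u v ≠ 0} :=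
    { toFun := fun p => ⟨p.1 + p.2 • u, by simpa [polar_add_smul] using p.1.2.2⟩
      invFun := fun v => (⟨v + (-(Q v / polar Q u v)) • u, by
        rw [Q_add_smul, neg_mul, div_mul_cancel₀ _ v.2, add_neg_cancel],
        by rw [polar_add_smul]; exact v.2⟩, Q v / polar Q u v)
      left_inv := by
        rintro ⟨⟨v, hv, huv⟩, t⟩
        simp [Q_add_smul, polar_add_smul, hv, huv]
      right_inv := fun v => by simp }
  rw [← Nat.card_coe_set_eq, ← Nat.card_prod, Nat.card_congr e, Nat.card_coe_set_eq]

theorem ncard_singular_polar_eq_zero [Field K] [Finite K] [Module K V] [Finite V]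
    {Q : QuadraticForm K V} {u : V} (hu : Q u = 0) (hpolar : ∃ w, polar Q u w ≠ 0) :
    {v | Q v = 0}.ncard * Nat.card K ^ 2 + Nat.card V =
      {v | Q v = 0 ∧ polar Q u v = 0}.ncard * Nat.card K ^ 2 + Nat.card V * Nat.card K := by
  have surj : Function.Surjective (Q.polarBilin u) := by
    obtain ⟨w, hw⟩ := hpolar
    exact LinearMap.surjective fun h => hw (LinearMap.congr_fun h w)
  have hyperplane : {v | polar Q u v = 0}.ncard * Nat.card K = Nat.card V :=
    ncard_dual_fiber_mul_card surj 0
  have compl : {v | polar Q u v = 0}.ncard + {v | polar Q u v ≠ 0}.ncard = Nat.card V :=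
    Set.ncard_add_ncard_compl {v | polar Q u v = 0}
  have split : {v | Q v = 0 ∧ polar Q u v = 0}.ncard + {v | Q v = 0 ∧ polar Q u v ≠ 0}.ncard =
      {v | Q v = 0}.ncard :=
    Set.ncard_inter_add_ncard_sdiff_eq_ncard {v | Q v = 0} {v | polar Q u v = 0}
  have affine := ncard_singular_polar_ne_zero_mul_card hu
  rw [← split]
  linear_combination Nat.card K * affine + Nat.card K * compl - hyperplane

end QuadraticForms

section Homotopy

variable {R M : Type*} [Ring R] [AddCommGroup M] [Module R M] {T S : M →ₗ[R] M}

theorem range_eq_ker_of_homotopy (sq : ∀ x, T (T x) = 0) (homotopy : ∀ x, T (S x) + S (T x) = x) :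
    T.range = T.ker := by
  ext x
  constructor
  · rintro ⟨y, rfl⟩
    exact sq y
  · intro hx
    have := homotopy x
    rw [LinearMap.mem_ker.1 hx, map_zero, add_zero] at this
    exact ⟨S x, this⟩

end Homotopy

section Octonions

/-- `Q` as a quadratic form in the sense of Mathlib. -/
def parabolicForm (F : Type) [Field F] : QuadraticForm F (Fin 7 → F) :=
  proj 0 4 + proj 1 5 + proj 2 6 - proj 3 3

theorem parabolicForm_apply (x : Fin 7 → F) : parabolicForm F x = quadForm x := by
  simp [parabolicForm, quadForm, pow_two]

theorem polar_parabolicForm (u v : Fin 7 → F) :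
    polar (parabolicForm F) u v =
      u 0 * v 4 + u 4 * v 0 + u 1 * v 5 + u 5 * v 1 + u 2 * v 6 + u 6 * v 2 - 2 * (u 3 * v 3) := by
  simp only [polar, parabolicForm_apply, quadForm, Pi.add_apply]
  ring

theorem exists_polar_parabolicForm_eq_one {u : Fin 7 → F} (hu : parabolicForm F u = 0)
    (hu0 : u ≠ 0) : ∃ w, polar (parabolicForm F) u w = 1 := by
  suffices ∃ w, polar (parabolicForm F) u w ≠ 0 by
    obtain ⟨w, hw⟩ := this
    exact ⟨(polar (parabolicForm F) u w)⁻¹ • w, by simp [polar_smul_right, hw]⟩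
  by_contra! h
  have h_single i := h (Pi.single i 1)
  simp only [polar_parabolicForm] at h_single
  have h0 : u 0 = 0 := by simpa using h_single 4
  have h1 : u 1 = 0 := by simpa using h_single 5
  have h2 : u 2 = 0 := by simpa using h_single 6
  have h4 : u 4 = 0 := by simpa using h_single 0
  have h5 : u 5 = 0 := by simpa using h_single 1
  have h6 : u 6 = 0 := by simpa using h_single 2
  have h3 : u 3 = 0 := by simpa [parabolicForm_apply, quadForm, h0, h1, h2] using hu
  exact hu0 (funext fun i => by fin_cases i <;> assumption)

/-- The split octonions over `F` as Zorn vector matrices: `(a, x, y, b)` is the matrix with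
diagonal `(a, b)` and off-diagonal vectors `x` and `y`, of trace `a + b` and norm `a b + x ⬝ y`.
Only the module structure of the product type is used; its componentwise multiplication is not the
one of octonions, for which see `pureMul`. -/
abbrev SplitOctonion (F : Type) : Type := F × (Fin 3 → F) × (Fin 3 → F) × F

/-- The coordinates `x₀, x₁, x₂`, the upper off-diagonal vector of a Zorn matrix. -/
abbrev upperPart (F : Type) [Field F] : (Fin 7 → F) →ₗ[F] Fin 3 → F :=
  LinearMap.funLeft F F ![0, 1, 2]

/-- The coordinates `x₄, x₅, x₆`, the lower off-diagonal vector of a Zorn matrix. -/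
abbrev lowerPart (F : Type) [Field F] : (Fin 7 → F) →ₗ[F] Fin 3 → F :=
  LinearMap.funLeft F F ![4, 5, 6]

theorem parabolicForm_eq_dotProduct_sub_sq (v : Fin 7 → F) :
    parabolicForm F v = upperPart F v ⬝ᵥ lowerPart F v - v 3 ^ 2 := by
  simp [parabolicForm_apply, quadForm, dotProduct, Fin.sum_univ_three, LinearMap.funLeft_apply]

/-- `F⁷` embedded in the split octonions as the elements of trace zero, with norm `Q`. -/
def pureOctonion : (Fin 7 → F) →ₗ[F] SplitOctonion F :=
  (LinearMap.proj 3).prod ((upperPart F).prod ((lowerPart F).prod (-LinearMap.proj 3)))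

theorem pureOctonion_apply (v : Fin 7 → F) :
    pureOctonion v = (v 3, upperPart F v, lowerPart F v, -v 3) :=
  rfl

/-- The trace of a split octonion, the sum of its diagonal entries. -/
def octonionTrace : SplitOctonion F →ₗ[F] F where
  toFun m := m.1 + m.2.2.2
  map_add' _ _ := add_add_add_comm _ _ _ _
  map_smul' _ _ := (smul_add _ _ _).symm

theorem octonionTrace_apply (m : SplitOctonion F) : octonionTrace m = m.1 + m.2.2.2 :=
  rfl

/-- Left multiplication of split octonions by the trace-zero octonion of a vector of `F⁷`,
a representation of the Clifford algebra of `-Q`. -/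
def pureMul : (Fin 7 → F) →ₗ[F] SplitOctonion F →ₗ[F] SplitOctonion F :=
  LinearMap.mk₂ F
    (fun u m =>
      let x := upperPart F u
      let y := lowerPart F u
      (u 3 * m.1 - x ⬝ᵥ m.2.2.1,
        u 3 • m.2.1 + m.2.2.2 • x + y ⨯₃ m.2.2.1,
        m.1 • y - u 3 • m.2.2.1 + x ⨯₃ m.2.1,
        -(u 3 * m.2.2.2) - y ⬝ᵥ m.2.1))
    (fun u u' m => by
      refine Prod.ext ?_ (Prod.ext ?_ (Prod.ext ?_ ?_)) <;>
        simp only [map_add, Pi.add_apply, LinearMap.add_apply, add_dotProduct, Prod.mk_add_mk] <;>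
        first | module | ring)
    (fun c u m => by
      refine Prod.ext ?_ (Prod.ext ?_ (Prod.ext ?_ ?_)) <;>
        simp only [map_smul, Pi.smul_apply, LinearMap.smul_apply, smul_dotProduct, smul_eq_mul,
          Prod.smul_mk] <;>
        first | module | ring)
    (fun u m m' => by
      refine Prod.ext ?_ (Prod.ext ?_ (Prod.ext ?_ ?_)) <;>
        simp only [map_add, Prod.fst_add, Prod.snd_add, dotProduct_add, Prod.mk_add_mk] <;>
        first | module | ring)
    (fun c u m => by
      refine Prod.ext ?_ (Prod.ext ?_ (Prod.ext ?_ ?_)) <;>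
        simp only [map_smul, Prod.smul_fst, Prod.smul_snd, dotProduct_smul, smul_eq_mul,
          Prod.smul_mk] <;>
        first | module | ring)

theorem pureMul_apply (u : Fin 7 → F) (m : SplitOctonion F) :
    pureMul u m =
      (u 3 * m.1 - upperPart F u ⬝ᵥ m.2.2.1,
        u 3 • m.2.1 + m.2.2.2 • upperPart F u + lowerPart F u ⨯₃ m.2.2.1,
        m.1 • lowerPart F u - u 3 • m.2.2.1 + upperPart F u ⨯₃ m.2.1,
        -(u 3 * m.2.2.2) - lowerPart F u ⬝ᵥ m.2.1) :=
  rfl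

theorem pureMul_pureMul_self (u : Fin 7 → F) (m : SplitOctonion F) :
    pureMul u (pureMul u m) = -parabolicForm F u • m := by
  simp only [pureMul_apply, parabolicForm_eq_dotProduct_sub_sq, map_add, map_sub, map_smul,
    dotProduct_add, dotProduct_sub, dotProduct_smul, dot_self_cross, cross_self,
    cross_cross_eq_smul_sub_smul', smul_eq_mul]
  refine Prod.ext ?_ (Prod.ext ?_ (Prod.ext ?_ ?_)) <;>
    simp only [Prod.smul_fst, Prod.smul_snd, smul_eq_mul,
      dotProduct_comm (lowerPart F u) (upperPart F u)] <;>
    first | module | ring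

theorem pureMul_anticomm (u w : Fin 7 → F) (m : SplitOctonion F) :
    pureMul u (pureMul w m) + pureMul w (pureMul u m) = -polar (parabolicForm F) u w • m := by
  have h := pureMul_pureMul_self (u + w) m
  simp only [map_add, LinearMap.add_apply, pureMul_pureMul_self,
    QuadraticMap.map_add (parabolicForm F)] at h
  linear_combination (norm := module) h

theorem range_pureMul {u : Fin 7 → F} (hu : parabolicForm F u = 0) (hu0 : u ≠ 0) :
    (pureMul u).range = (pureMul u).ker := by
  obtain ⟨w, hw⟩ := exists_polar_parabolicForm_eq_one hu hu0
  refine range_eq_ker_of_homotopy (S := -pureMul w) (fun m => ?_) fun m => ?_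
  · rw [pureMul_pureMul_self, hu, neg_zero, zero_smul]
  · have := pureMul_anticomm u w m
    rw [hw, neg_one_smul] at this
    rw [LinearMap.neg_apply, LinearMap.neg_apply, map_neg, ← neg_add, this, neg_neg]

theorem finrank_range_pureMul {u : Fin 7 → F} (hu : parabolicForm F u = 0) (hu0 : u ≠ 0) :
    finrank F (pureMul u).range = 4 := by
  have rank_nullity := (pureMul u).finrank_range_add_finrank_ker
  have finrank_octonions : finrank F (SplitOctonion F) = 8 := by simp
  rw [← range_pureMul hu hu0, finrank_octonions] at rank_nullity
  lia

theorem octonionTrace_pureMul_pureOctonion (u w : Fin 7 → F) :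
    octonionTrace (pureMul u (pureOctonion w)) = -polar (parabolicForm F) u w := by
  simp only [octonionTrace_apply, pureMul_apply, pureOctonion_apply, polar_parabolicForm,
    Matrix.vec3_dotProduct, LinearMap.funLeft_apply, Matrix.cons_val]
  ring

theorem range_pureOctonion : (pureOctonion (F := F)).range = octonionTrace.ker := by
  ext ⟨a, x, y, b⟩
  constructor
  · rintro ⟨v, hv⟩
    rw [← hv]
    simp [octonionTrace_apply, pureOctonion_apply]
  · intro h
    have hb : -a = b := neg_eq_of_add_eq_zero_right h
    refine ⟨![x 0, x 1, x 2, a, y 0, y 1, y 2], ?_⟩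
    ext i <;> try fin_cases i
    all_goals simp [pureOctonion_apply, LinearMap.funLeft_apply, hb]

theorem range_pureMul_comp_pureOctonion {u : Fin 7 → F} (hu : parabolicForm F u = 0)
    (hu0 : u ≠ 0) : (pureMul u ∘ₗ pureOctonion).range = (pureMul u).range := by
  refine le_antisymm (LinearMap.range_comp_le_range _ _) ?_
  rintro _ ⟨m, rfl⟩
  obtain ⟨w, hw⟩ := exists_polar_parabolicForm_eq_one hu hu0
  let k := pureMul u (pureOctonion w)
  have trace_k : octonionTrace k = -1 := by rw [octonionTrace_pureMul_pureOctonion, hw]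
  have mul_k : pureMul u k = 0 := by rw [pureMul_pureMul_self, hu, neg_zero, zero_smul]
  have pure : m + octonionTrace m • k ∈ pureOctonion.range := by
    rw [range_pureOctonion, LinearMap.mem_ker, map_add, map_smul, trace_k, smul_neg, smul_eq_mul,
      mul_one, add_neg_cancel]
  obtain ⟨v, hv⟩ := pure
  refine ⟨v, ?_⟩
  rw [LinearMap.comp_apply, hv, map_add, map_smul, mul_k, smul_zero, add_zero]

theorem finrank_ker_pureMul_comp_pureOctonion {u : Fin 7 → F} (hu : parabolicForm F u = 0)
    (hu0 : u ≠ 0) : finrank F (pureMul u ∘ₗ pureOctonion).ker = 3 := by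
  have rank_nullity := (pureMul u ∘ₗ pureOctonion).finrank_range_add_finrank_ker
  rw [range_pureMul_comp_pureOctonion hu hu0, finrank_range_pureMul hu hu0,
    finrank_fin_fun] at rank_nullity
  lia

theorem pureOctonion_injective : Function.Injective (pureOctonion (F := F)) := by
  intro u v h
  obtain ⟨h_mid, h_upper, h_lower, -⟩ : u 3 = v 3 ∧ upperPart F u = upperPart F v ∧
      lowerPart F u = lowerPart F v ∧ -u 3 = -v 3 := by simpa [pureOctonion_apply] using h
  ext i
  fin_cases i
  exacts [congr_fun h_upper 0, congr_fun h_upper 1, congr_fun h_upper 2, h_mid,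
    congr_fun h_lower 0, congr_fun h_lower 1, congr_fun h_lower 2]

theorem pureMul_one (u : Fin 7 → F) : pureMul u (1, 0, 0, 1) = pureOctonion u := by
  simp [pureMul_apply, pureOctonion_apply]

theorem pureMul_pureOctonion_add_swap (u v : Fin 7 → F) :
    pureMul u (pureOctonion v) + pureMul v (pureOctonion u) =
      -polar (parabolicForm F) u v • (1, 0, 0, 1) := by
  rw [← pureMul_one, ← pureMul_one, pureMul_anticomm]

theorem polar_eq_zero_of_pureMul_eq_zero {u v : Fin 7 → F}
    (h : pureMul u (pureOctonion v) = 0) : polar (parabolicForm F) u v = 0 := by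
  rw [← neg_eq_zero, ← octonionTrace_pureMul_pureOctonion, h, map_zero]

theorem singular_of_pureMul_eq_zero {u v : Fin 7 → F} (hu0 : u ≠ 0)
    (h : pureMul u (pureOctonion v) = 0) : parabolicForm F v = 0 := by
  have swap : pureMul v (pureOctonion u) = 0 := by
    simpa [h, polar_eq_zero_of_pureMul_eq_zero h] using pureMul_pureOctonion_add_swap u v
  have sq := pureMul_pureMul_self v (pureOctonion u)
  rw [swap, map_zero, eq_comm, smul_eq_zero, neg_eq_zero] at sq
  exact sq.resolve_right fun h => hu0 (pureOctonion_injective (h.trans (map_zero _).symm))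

theorem hexEq_iff_offDiagonal_eq_zero (u v : Fin 7 → F) :
    HexEq u v ↔
      (pureMul u (pureOctonion v)).2.1 = 0 ∧ (pureMul u (pureOctonion v)).2.2.1 = 0 := by
  simp only [HexEq, grass, pureMul_apply, pureOctonion_apply, cross_apply, funext_iff,
    Fin.forall_fin_succ, LinearMap.funLeft_apply, Matrix.cons_val, Pi.add_apply, Pi.sub_apply,
    Pi.smul_apply, Pi.zero_apply, smul_eq_mul, Fin.succ_zero_eq_one, Fin.succ_one_eq_two,
    IsEmpty.forall_iff, and_true]
  grind

theorem pureMul_eq_zero_iff {u : Fin 7 → F} (hu : parabolicForm F u = 0) (hu0 : u ≠ 0)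
    (v : Fin 7 → F) :
    pureMul u (pureOctonion v) = 0 ↔ polar (parabolicForm F) u v = 0 ∧ HexEq u v := by
  rw [hexEq_iff_offDiagonal_eq_zero]
  constructor
  · intro h
    rw [h]
    exact ⟨polar_eq_zero_of_pureMul_eq_zero h, rfl, rfl⟩
  · rintro ⟨hpolar, hx, hy⟩
    have trace_eq := octonionTrace_pureMul_pureOctonion u v
    have mul_eq := pureMul_pureMul_self u (pureOctonion v)
    rw [hu, neg_zero, zero_smul] at mul_eq
    generalize pureMul u (pureOctonion v) = p at *
    obtain ⟨c, x, y, d⟩ := p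
    obtain rfl : x = 0 := hx
    obtain rfl : y = 0 := hy
    obtain rfl : d = -c := by
      rw [hpolar, neg_zero] at trace_eq
      exact (neg_eq_of_add_eq_zero_right trace_eq).symm
    have scaled : c • pureOctonion u = 0 := by
      simpa [pureMul_apply, pureOctonion_apply, mul_comm] using mul_eq
    rcases smul_eq_zero.1 scaled with rfl | h
    · simp
    · exact absurd (pureOctonion_injective (h.trans (map_zero _).symm)) hu0

end Octonions

section MovingLines

theorem satisfiesHexEq_span_pair_iff (u v : Fin 7 → F) :
    SatisfiesHexEq (Submodule.span F {u, v}) ↔ HexEq u v := by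
  constructor
  · intro h
    exact h u (Submodule.subset_span (by simp)) v (Submodule.subset_span (by simp))
  · intro h x hx y hy
    obtain ⟨a, b, rfl⟩ := Submodule.mem_span_pair.1 hx
    obtain ⟨c, d, rfl⟩ := Submodule.mem_span_pair.1 hy
    have grass_combination (i j : Fin 7) :
        grass (a • u + b • v) (c • u + d • v) i j = (a * d - b * c) * grass u v i j := by
      simp only [grass, Pi.add_apply, Pi.smul_apply, smul_eq_mul]
      ring
    simp only [HexEq, grass_combination] at h ⊢
    obtain ⟨h1, h2, h3, h4, h5, h6⟩ := h
    rw [h1, h2, h3, h4, h5, h6]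
    simp

theorem linearIndependent_of_not_hexEq {u v : Fin 7 → F} (h : ¬ HexEq u v) :
    LinearIndependent F ![u, v] := by
  by_contra hdep
  have grass_eq_zero : ∀ i j, grass u v i j = 0 := by
    rw [LinearIndependent.pair_iff] at hdep
    push Not at hdep
    obtain ⟨a, b, hab, hne⟩ := hdep
    intro i j
    have hi : a * u i + b * v i = 0 := congr_fun hab i
    have hj : a * u j + b * v j = 0 := congr_fun hab j
    have ha : a * grass u v i j = 0 := by
      rw [grass]
      linear_combination v j * hi - v i * hj
    have hb : b * grass u v i j = 0 := by
      rw [grass]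
      linear_combination u i * hj - u j * hi
    by_cases h0 : a = 0
    · exact (mul_eq_zero.1 hb).resolve_left (hne h0)
    · exact (mul_eq_zero.1 ha).resolve_left h0
  exact h (by simp [HexEq, grass_eq_zero])

/-- The vectors `v` such that `u` and `v` span a moving line, for a singular vector `u ≠ 0`. -/
def movingNeighbors (u : Fin 7 → F) : Set (Fin 7 → F) :=
  {v | parabolicForm F v = 0 ∧ polar (parabolicForm F) u v = 0 ∧ ¬ HexEq u v}

theorem frame_movingLine_iff (s : Fin 2 → Fin 7 → F) :
    LinearIndependent F s ∧ (∀ x ∈ Submodule.span F (Set.range s), quadForm x = 0) ∧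
        ¬ SatisfiesHexEq (Submodule.span F (Set.range s)) ↔
      s 0 ∈ {u | parabolicForm F u = 0 ∧ u ≠ 0} ∧ s 1 ∈ movingNeighbors (s 0) := by
  have hs : s = ![s 0, s 1] := by
    ext i
    fin_cases i <;> rfl
  have range_s : Set.range s = {s 0, s 1} := by rw [hs]; exact Matrix.range_cons_cons_empty _ _ _
  simp_rw [range_s, satisfiesHexEq_span_pair_iff, ← parabolicForm_apply,
    forall_mem_span_pair_eq_zero_iff]
  constructor
  · rintro ⟨indep, ⟨h0, h1, hpolar⟩, hhex⟩
    exact ⟨⟨h0, indep.ne_zero 0⟩, h1, hpolar, hhex⟩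
  · rintro ⟨⟨h0, -⟩, h1, hpolar, hhex⟩
    exact ⟨hs ▸ linearIndependent_of_not_hexEq hhex, ⟨h0, h1, hpolar⟩, hhex⟩

theorem ncard_hexEq {u : Fin 7 → F} (hu : parabolicForm F u = 0) (hu0 : u ≠ 0) :
    {v | parabolicForm F v = 0 ∧ polar (parabolicForm F) u v = 0 ∧ HexEq u v}.ncard =
      Nat.card F ^ 3 := by
  have ker_eq : {v | parabolicForm F v = 0 ∧ polar (parabolicForm F) u v = 0 ∧ HexEq u v} =
      (pureMul u ∘ₗ pureOctonion).ker := by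
    ext v
    constructor
    · rintro ⟨-, h⟩
      exact (pureMul_eq_zero_iff hu hu0 v).2 h
    · intro h
      exact ⟨singular_of_pureMul_eq_zero hu0 h, (pureMul_eq_zero_iff hu hu0 v).1 h⟩
  rw [ker_eq, ← Nat.card_coe_set_eq, SetLike.coe_sort_coe, Module.natCard_eq_pow_finrank (K := F),
    finrank_ker_pureMul_comp_pureOctonion hu hu0]

variable [Finite F]

theorem ncard_singular_vectors : {v | parabolicForm F v = 0}.ncard = Nat.card F ^ 6 := by
  have count := ncard_dotProduct_eq_apply 2 fun a : F => a ^ 2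
  have coordinates : {v | parabolicForm F v = 0}.ncard =
      {p : ((Fin 3 → F) × F) × (Fin 3 → F) | p.1.1 ⬝ᵥ p.2 = p.1.2 ^ 2}.ncard := by
    refine Set.ncard_congr (fun v _ => ((upperPart F v, v 3), lowerPart F v)) ?_ ?_ ?_
    · intro v hv
      have : upperPart F v ⬝ᵥ lowerPart F v - v 3 ^ 2 = 0 := by
        rw [← parabolicForm_eq_dotProduct_sub_sq]
        exact hv
      exact sub_eq_zero.1 this
    · intro v w _ _ h
      simp only [Prod.mk.injEq] at h
      exact pureOctonion_injective (by simp [pureOctonion_apply, h])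
    · rintro ⟨⟨x, a⟩, y⟩ h
      have : ((a, x, y, -a) : SplitOctonion F) ∈ pureOctonion.range := by
        rw [range_pureOctonion]
        exact add_neg_cancel a
      obtain ⟨v, hv⟩ := this
      simp only [pureOctonion_apply, Prod.mk.injEq] at hv
      obtain ⟨rfl, rfl, rfl, -⟩ := hv
      refine ⟨v, ?_, rfl⟩
      rw [Set.mem_ofPred_eq, parabolicForm_eq_dotProduct_sub_sq]
      exact sub_eq_zero.2 h
  have zero_fiber : {a : F | a ^ 2 = 0}.ncard = 1 := by simp
  rw [zero_fiber] at count
  rw [coordinates]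
  linear_combination count

theorem ncard_singular_orthogonal {u : Fin 7 → F} (hu : parabolicForm F u = 0) (hu0 : u ≠ 0) :
    {v | parabolicForm F v = 0 ∧ polar (parabolicForm F) u v = 0}.ncard = Nat.card F ^ 5 := by
  obtain ⟨w, hw⟩ := exists_polar_parabolicForm_eq_one hu hu0
  have count := ncard_singular_polar_eq_zero hu ⟨w, hw.trans_ne one_ne_zero⟩
  rw [ncard_singular_vectors, Nat.card_fun, Nat.card_fin] at count
  refine Nat.eq_of_mul_eq_mul_right (pow_pos Nat.card_pos 2 : 0 < Nat.card F ^ 2) ?_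
  linear_combination -count

theorem ncard_movingNeighbors {u : Fin 7 → F} (hu : parabolicForm F u = 0) (hu0 : u ≠ 0) :
    (movingNeighbors u).ncard = Nat.card F ^ 5 - Nat.card F ^ 3 := by
  have split := Set.ncard_inter_add_ncard_sdiff_eq_ncard
    {v | parabolicForm F v = 0 ∧ polar (parabolicForm F) u v = 0} {v | HexEq u v}
  rw [ncard_singular_orthogonal hu hu0] at split
  have inter : {v | parabolicForm F v = 0 ∧ polar (parabolicForm F) u v = 0} ∩ {v | HexEq u v} =
      {v | parabolicForm F v = 0 ∧ polar (parabolicForm F) u v = 0 ∧ HexEq u v} := by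
    ext; simp [and_assoc]
  have diff : {v | parabolicForm F v = 0 ∧ polar (parabolicForm F) u v = 0} \ {v | HexEq u v} =
      movingNeighbors u := by
    ext; simp [movingNeighbors, and_assoc]
  rw [inter, diff, ncard_hexEq hu hu0] at split
  lia

theorem ncard_movingLine_mul :
    {W : Submodule F (Fin 7 → F) | MovingLine W}.ncard *
        ((Nat.card F ^ 2 - 1) * (Nat.card F ^ 2 - Nat.card F)) =
      (Nat.card F ^ 6 - 1) * (Nat.card F ^ 5 - Nat.card F ^ 3) := by
  have nonzero : {u : Fin 7 → F | parabolicForm F u = 0 ∧ u ≠ 0}.ncard = Nat.card F ^ 6 - 1 := by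
    rw [← ncard_singular_vectors]
    exact Set.ncard_sdiff_singleton_of_mem (map_zero (parabolicForm F))
  have frames := ncard_submodule_mul_prod 2 fun W : Submodule F (Fin 7 → F) =>
    (∀ x ∈ W, quadForm x = 0) ∧ ¬ SatisfiesHexEq W
  simp_rw [frame_movingLine_iff] at frames
  rw [Fin.prod_univ_two, Fin.val_zero, Fin.val_one, pow_zero, pow_one] at frames
  have neighbors : ∀ u ∈ {u : Fin 7 → F | parabolicForm F u = 0 ∧ u ≠ 0},
      (movingNeighbors u).ncard = Nat.card F ^ 5 - Nat.card F ^ 3 :=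
    fun u hu => ncard_movingNeighbors hu.1 hu.2
  rw [← nonzero, ← ncard_fst_mem_snd_mem neighbors]
  simp only [MovingLine, TotallySingularLine, and_assoc]
  refine frames.trans ?_
  rw [← Set.ncard_image_of_injective _ (finTwoArrowEquiv (Fin 7 → F)).injective,
    Equiv.image_eq_preimage_symm]
  rfl

end MovingLines

/-- Over a finite field with `q` elements, the number of moving lines of the
quadratic form `Q(x) = x₀x₄ + x₁x₅ + x₂x₆ − x₃²` on `F⁷` equals `(q⁴+q²+1)(q+1)q²`. -/
theorem stmt_9 (q : ℕ) (F : Type) [Field F] [Fintype F] (hq : Fintype.card F = q) :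
    {W : Submodule F (Fin 7 → F) | MovingLine W}.ncard =
      (q ^ 4 + q ^ 2 + 1) * (q + 1) * q ^ 2 := by
  have count := ncard_movingLine_mul (F := F)
  rw [Nat.card_eq_fintype_card, hq] at count
  have one_lt_q : 1 < q := hq ▸ Fintype.one_lt_card
  have q_lt_sq : q < q ^ 2 := lt_self_pow₀ one_lt_q one_lt_two
  have pos : 0 < (q ^ 2 - 1) * (q ^ 2 - q) := Nat.mul_pos (by lia) (by lia)
  refine Nat.eq_of_mul_eq_mul_right pos (count.trans ?_)
  have one_le_pow (k : ℕ) : 1 ≤ q ^ k := Nat.one_le_pow k q one_lt_q.le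
  have pow_le : q ^ 3 ≤ q ^ 5 := Nat.pow_le_pow_right one_lt_q.le (by lia)
  zify [one_le_pow 6, pow_le, one_le_pow 2, q_lt_sq.le]
  ring
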